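/- For all integers r, s ≥ 1 with r + s ≥ 4 even and every τ in the complex upper half-plane, 0 = Σ_{i+j=r+s, i,j≥1} (C(i−1,r−1) + C(i−1,s−1)) (P_{i,j}(τ) − E_{i+j}(τ)) − P_{r,s}(τ) + (−1)^s E_{r+s}(τ), where C(a,b) denotes the binomial coefficient. -/

import Mathlib

open Complex Finset Filter

/-- The Eisenstein series `E_k` as a `q`-series, defined on `ℂ`
(meaningful on the upper half-plane), with `E_k = 0` for `k` odd and `k < 2`. -/
noncomputable def Eis (k : ℕ) (τ : ℂ) : ℂ :=
  if Even k ∧ 2 ≤ k then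
    (2 / (Nat.factorial (k - 1) : ℂ)) *
      (-(bernoulli k : ℂ) / (2 * k) +
        ∑' n : ℕ, (∑ d ∈ (n + 1).divisors, (d : ℂ) ^ (k - 1)) *
          Complex.exp (2 * Real.pi * Complex.I * τ) ^ (n + 1))
  else 0

/-- `E_k'(τ) = (2π√-1)⁻¹ dE_k/dτ`. -/
noncomputable def Eis' (k : ℕ) (τ : ℂ) : ℂ :=
  (2 * Real.pi * Complex.I)⁻¹ * deriv (Eis k) τ

/-- `P_{r,s} = E_r E_s + δ_{r,2} E_s'/s + δ_{s,2} E_r'/r`. -/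
noncomputable def Pf (r s : ℕ) (τ : ℂ) : ℂ :=
  Eis r τ * Eis s τ + (if r = 2 then Eis' s τ / s else 0) +
    (if s = 2 then Eis' r τ / r else 0)



/-! ### Combinatorial part -/

/-- quadruples `((m,d),(n,e))` of positive integers with `m d + n e = N` -/
def quads (N : ℕ) : Finset ((ℕ × ℕ) × (ℕ × ℕ)) :=
  ((Icc 1 N ×ˢ Icc 1 N) ×ˢ (Icc 1 N ×ˢ Icc 1 N)).filter
    (fun q => q.1.1 * q.1.2 + q.2.1 * q.2.2 = N)

theorem mem_quads {N m d n e : ℕ} : ((m, d), (n, e)) ∈ quads N ↔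
    (1 ≤ m ∧ 1 ≤ d ∧ 1 ≤ n ∧ 1 ≤ e) ∧ m * d + n * e = N := by
  simp only [quads, mem_filter, mem_product, mem_Icc]
  constructor
  · rintro ⟨⟨⟨⟨h1, _⟩, h2, _⟩, ⟨h3, _⟩, h4, _⟩, h⟩
    exact ⟨⟨h1, h2, h3, h4⟩, h⟩
  · rintro ⟨⟨h1, h2, h3, h4⟩, h⟩
    have := Nat.le_mul_of_pos_right m h2
    have := Nat.le_mul_of_pos_left d h1
    have := Nat.le_mul_of_pos_right n h4
    have := Nat.le_mul_of_pos_left e h3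
    refine ⟨⟨⟨⟨h1, ?_⟩, h2, ?_⟩, ⟨h3, ?_⟩, h4, ?_⟩, h⟩ <;> omega

section comb
variable {K : Type*} [Field K]

def TT (N : ℕ) (x y : K) : K := ∑ q ∈ quads N, x ^ q.1.2 * y ^ q.2.2
def LL (N : ℕ) (x y : K) : K := ∑ q ∈ (quads N).filter (fun q => q.1.1 < q.2.1), x ^ q.1.2 * y ^ q.2.2
def MM (N : ℕ) (x y : K) : K := ∑ l ∈ N.divisors, ∑ c ∈ Ico 1 l, x ^ (l - c) * y ^ c
def RR (N : ℕ) (x : K) : K := ∑ d ∈ N.divisors, (((N / d : ℕ) : K) - 1) * x ^ d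

theorem TT_eq1 (N : ℕ) (x y : K) : TT N x y = LL N x y + LL N y x + MM N x y := by
  have h1 : TT N x y = LL N x y + ∑ q ∈ (quads N).filter (fun q => ¬ q.1.1 < q.2.1), x ^ q.1.2 * y ^ q.2.2 :=
    (Finset.sum_filter_add_sum_filter_not _ _ _).symm
  have h2 : ∑ q ∈ (quads N).filter (fun q => ¬ q.1.1 < q.2.1), x ^ q.1.2 * y ^ q.2.2
      = ∑ q ∈ (quads N).filter (fun q => q.2.1 < q.1.1), x ^ q.1.2 * y ^ q.2.2
       + ∑ q ∈ (quads N).filter (fun q => q.1.1 = q.2.1), x ^ q.1.2 * y ^ q.2.2 := by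
    rw [← Finset.sum_union]
    · congr 1
      ext q
      simp only [mem_filter, mem_union]
      constructor
      · rintro ⟨a, b⟩
        rcases Nat.lt_or_ge q.2.1 q.1.1 with h | h
        · exact Or.inl ⟨a, h⟩
        · exact Or.inr ⟨a, by omega⟩
      · rintro (⟨a, b⟩ | ⟨a, b⟩) <;> exact ⟨a, by omega⟩
    · rw [Finset.disjoint_left]
      intro q
      simp only [mem_filter]
      rintro ⟨_, a⟩ ⟨_, b⟩
      omega
  have h3 : ∑ q ∈ (quads N).filter (fun q => q.2.1 < q.1.1), x ^ q.1.2 * y ^ q.2.2 = LL N y x := by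
    unfold LL
    refine Finset.sum_nbij' (fun q => (q.2, q.1)) (fun q => (q.2, q.1)) ?_ ?_ ?_ ?_ ?_
    · rintro ⟨⟨m, d⟩, n, e⟩ h
      simp only [mem_filter, mem_quads] at h ⊢
      exact ⟨⟨by tauto, by omega⟩, h.2⟩
    · rintro ⟨⟨m, d⟩, n, e⟩ h
      simp only [mem_filter, mem_quads] at h ⊢
      exact ⟨⟨by tauto, by omega⟩, h.2⟩
    · rintro ⟨⟨m, d⟩, n, e⟩ h; rfl
    · rintro ⟨⟨m, d⟩, n, e⟩ h; rfl
    · rintro ⟨⟨m, d⟩, n, e⟩ h; simp [mul_comm]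
  have h4 : ∑ q ∈ (quads N).filter (fun q => q.1.1 = q.2.1), x ^ q.1.2 * y ^ q.2.2 = MM N x y := by
    unfold MM
    rw [Finset.sum_sigma']
    refine Finset.sum_nbij' (fun q => ⟨q.1.2 + q.2.2, q.2.2⟩) 
      (fun p => ((N / p.1, p.1 - p.2), (N / p.1, p.2))) ?_ ?_ ?_ ?_ ?_
    · rintro ⟨⟨m, d⟩, n, e⟩ h
      simp only [mem_filter, mem_quads] at h
      obtain ⟨⟨⟨h1, h2, h3, h4⟩, h5⟩, rfl⟩ := h
      simp only [mem_sigma, Nat.mem_divisors, mem_Ico]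
      refine ⟨⟨⟨m, by rw [← h5]; ring⟩, ?_⟩, by omega, by omega⟩
      have := Nat.mul_pos h1 h2
      omega
    · rintro ⟨l, c⟩ h
      simp only [mem_sigma, Nat.mem_divisors, mem_Ico] at h
      obtain ⟨⟨h1, h2⟩, h3, h4⟩ := h
      simp only [mem_filter, mem_quads, and_true]
      have h5 : 1 ≤ N / l := Nat.div_pos (Nat.le_of_dvd (by omega) h1) (by omega)
      refine ⟨⟨h5, by omega, h5, h3⟩, ?_⟩
      rw [← mul_add, Nat.sub_add_cancel h4.le, Nat.div_mul_cancel h1]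
    · rintro ⟨⟨m, d⟩, n, e⟩ h
      simp only [mem_filter, mem_quads] at h
      obtain ⟨⟨⟨h1, h2, h3, h4⟩, h5⟩, rfl⟩ := h
      have h6 : N / (d + e) = m := by
        rw [← h5, ← mul_add]; exact Nat.mul_div_cancel _ (by omega)
      simp [h6]
    · rintro ⟨l, c⟩ h
      simp only [mem_sigma, Nat.mem_divisors, mem_Ico] at h
      obtain ⟨⟨h1, h2⟩, h3, h4⟩ := h
      simp [Nat.sub_add_cancel h4.le]
    · rintro ⟨⟨m, d⟩, n, e⟩ h
      simp
  rw [h1, h2, h3, h4]; ring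

theorem TT_eq2 (N : ℕ) (x y : K) : TT N x y = LL N x (x * y) + LL N y (x * y) + RR N (x * y) := by
  have h1 : TT N x y = ∑ q ∈ (quads N).filter (fun q => q.2.2 < q.1.2), x ^ q.1.2 * y ^ q.2.2
     + ∑ q ∈ (quads N).filter (fun q => ¬ q.2.2 < q.1.2), x ^ q.1.2 * y ^ q.2.2 :=
    (Finset.sum_filter_add_sum_filter_not _ _ _).symm
  have h2 : ∑ q ∈ (quads N).filter (fun q => ¬ q.2.2 < q.1.2), x ^ q.1.2 * y ^ q.2.2
      = ∑ q ∈ (quads N).filter (fun q => q.1.2 < q.2.2), x ^ q.1.2 * y ^ q.2.2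
       + ∑ q ∈ (quads N).filter (fun q => q.1.2 = q.2.2), x ^ q.1.2 * y ^ q.2.2 := by
    rw [← Finset.sum_union]
    · congr 1
      ext q
      simp only [mem_filter, mem_union]
      constructor
      · rintro ⟨a, b⟩
        rcases Nat.lt_or_ge q.1.2 q.2.2 with h | h
        · exact Or.inl ⟨a, h⟩
        · exact Or.inr ⟨a, by omega⟩
      · rintro (⟨a, b⟩ | ⟨a, b⟩) <;> exact ⟨a, by omega⟩
    · rw [Finset.disjoint_left]
      intro q
      simp only [mem_filter]
      rintro ⟨_, a⟩ ⟨_, b⟩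
      omega
  have h3 : ∑ q ∈ (quads N).filter (fun q => q.2.2 < q.1.2), x ^ q.1.2 * y ^ q.2.2 = LL N x (x * y) := by
    unfold LL
    refine Finset.sum_nbij' (fun q => ((q.1.1, q.1.2 - q.2.2), (q.1.1 + q.2.1, q.2.2)))
      (fun q => ((q.1.1, q.1.2 + q.2.2), (q.2.1 - q.1.1, q.2.2))) ?_ ?_ ?_ ?_ ?_
    · rintro ⟨⟨m, d⟩, n, e⟩ h
      simp only [mem_filter, mem_quads] at h ⊢
      obtain ⟨⟨⟨h1, h2, h3, h4⟩, h5⟩, h6⟩ := h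
      obtain ⟨f, rfl⟩ := Nat.exists_eq_add_of_lt h6
      refine ⟨⟨⟨by omega, by omega, by omega, by omega⟩, ?_⟩, by omega⟩
      rw [show e + f + 1 - e = f + 1 by omega, ← h5]; ring
    · rintro ⟨⟨m, d⟩, n, e⟩ h
      simp only [mem_filter, mem_quads] at h ⊢
      obtain ⟨⟨⟨h1, h2, h3, h4⟩, h5⟩, h6⟩ := h
      obtain ⟨f, rfl⟩ := Nat.exists_eq_add_of_lt h6
      refine ⟨⟨⟨by omega, by omega, by omega, by omega⟩, ?_⟩, by omega⟩
      rw [show m + f + 1 - m = f + 1 by omega, ← h5]; ring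
    · rintro ⟨⟨m, d⟩, n, e⟩ h
      simp only [mem_filter, mem_quads] at h
      refine Prod.ext (Prod.ext ?_ ?_) (Prod.ext ?_ ?_) <;> simp only <;> omega
    · rintro ⟨⟨m, d⟩, n, e⟩ h
      simp only [mem_filter, mem_quads] at h
      refine Prod.ext (Prod.ext ?_ ?_) (Prod.ext ?_ ?_) <;> simp only <;> omega
    · rintro ⟨⟨m, d⟩, n, e⟩ h
      simp only [mem_filter, mem_quads] at h
      simp only
      obtain ⟨f, rfl⟩ := Nat.exists_eq_add_of_lt h.2
      rw [show e + f + 1 - e = f + 1 by omega]; ring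
  have h4 : ∑ q ∈ (quads N).filter (fun q => q.1.2 < q.2.2), x ^ q.1.2 * y ^ q.2.2 = LL N y (x * y) := by
    unfold LL
    refine Finset.sum_nbij' (fun q => ((q.2.1, q.2.2 - q.1.2), (q.1.1 + q.2.1, q.1.2)))
      (fun q => ((q.2.1 - q.1.1, q.2.2), (q.1.1, q.1.2 + q.2.2))) ?_ ?_ ?_ ?_ ?_
    · rintro ⟨⟨m, d⟩, n, e⟩ h
      simp only [mem_filter, mem_quads] at h ⊢
      obtain ⟨⟨⟨h1, h2, h3, h4⟩, h5⟩, h6⟩ := h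
      obtain ⟨f, rfl⟩ := Nat.exists_eq_add_of_lt h6
      refine ⟨⟨⟨by omega, by omega, by omega, by omega⟩, ?_⟩, by omega⟩
      rw [show d + f + 1 - d = f + 1 by omega, ← h5]; ring
    · rintro ⟨⟨m, d⟩, n, e⟩ h
      simp only [mem_filter, mem_quads] at h ⊢
      obtain ⟨⟨⟨h1, h2, h3, h4⟩, h5⟩, h6⟩ := h
      obtain ⟨f, rfl⟩ := Nat.exists_eq_add_of_lt h6
      refine ⟨⟨⟨by omega, by omega, by omega, by omega⟩, ?_⟩, by omega⟩
      rw [show m + f + 1 - m = f + 1 by omega, ← h5]; ring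
    · rintro ⟨⟨m, d⟩, n, e⟩ h
      simp only [mem_filter, mem_quads] at h
      refine Prod.ext (Prod.ext ?_ ?_) (Prod.ext ?_ ?_) <;> simp only <;> omega
    · rintro ⟨⟨m, d⟩, n, e⟩ h
      simp only [mem_filter, mem_quads] at h
      refine Prod.ext (Prod.ext ?_ ?_) (Prod.ext ?_ ?_) <;> simp only <;> omega
    · rintro ⟨⟨m, d⟩, n, e⟩ h
      simp only [mem_filter, mem_quads] at h
      simp only
      obtain ⟨f, rfl⟩ := Nat.exists_eq_add_of_lt h.2
      rw [show d + f + 1 - d = f + 1 by omega]; ring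
  have h5 : ∑ q ∈ (quads N).filter (fun q => q.1.2 = q.2.2), x ^ q.1.2 * y ^ q.2.2 = RR N (x * y) := by
    have : RR N (x * y) = ∑ d ∈ N.divisors, ∑ c ∈ Ico 1 (N / d), (x * y) ^ d := by
      unfold RR
      refine Finset.sum_congr rfl fun d hd => ?_
      rw [Nat.mem_divisors] at hd
      have h5 : 1 ≤ N / d := Nat.div_pos (Nat.le_of_dvd (by omega) hd.1) 
        (Nat.pos_of_dvd_of_pos hd.1 (by omega))
      simp [Nat.cast_sub h5]
    rw [this, Finset.sum_sigma']
    refine Finset.sum_nbij' (fun q => ⟨q.1.2, q.1.1⟩) 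
      (fun p => ((p.2, p.1), (N / p.1 - p.2, p.1))) ?_ ?_ ?_ ?_ ?_
    · rintro ⟨⟨m, d⟩, n, e⟩ h
      simp only [mem_filter, mem_quads] at h
      obtain ⟨⟨⟨h1, h2, h3, h4⟩, h5⟩, rfl⟩ := h
      have h6 : N / d = m + n := by
        rw [← h5, ← add_mul]; exact Nat.mul_div_cancel _ (by omega)
      simp only [mem_sigma, Nat.mem_divisors, mem_Ico, h6]
      refine ⟨⟨⟨m + n, by rw [← h5]; ring⟩, ?_⟩, by omega, by omega⟩
      have := Nat.mul_pos h1 h2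
      omega
    · rintro ⟨d, c⟩ h
      simp only [mem_sigma, Nat.mem_divisors, mem_Ico] at h
      obtain ⟨⟨h1, h2⟩, h3, h4⟩ := h
      simp only [mem_filter, mem_quads, and_true]
      have h5 : 1 ≤ d := Nat.pos_of_dvd_of_pos h1 (by omega)
      refine ⟨⟨h3, by omega, by omega, by omega⟩, ?_⟩
      rw [← add_mul, Nat.add_sub_cancel' h4.le, Nat.div_mul_cancel h1]
    · rintro ⟨⟨m, d⟩, n, e⟩ h
      simp only [mem_filter, mem_quads] at h
      obtain ⟨⟨⟨h1, h2, h3, h4⟩, h5⟩, rfl⟩ := h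
      have h6 : N / d = m + n := by
        rw [← h5, ← add_mul]; exact Nat.mul_div_cancel _ (by omega)
      simp [h6]
    · rintro ⟨l, c⟩ h
      rfl
    · rintro ⟨⟨m, d⟩, n, e⟩ h
      simp only [mem_filter, mem_quads] at h
      simp [h.2, mul_pow]
  rw [h1, h2, h3, h4, h5]; ring

/-- positive part of the zeta function -/
def br (N : ℕ) (x : K) : K := ∑ d ∈ N.divisors, (x ^ d - x⁻¹ ^ d)

theorem sum_br (N : ℕ) (x y : K) :
    ∑ p ∈ antidiagonal N, br p.1 x * br p.2 y
      = TT N x y + TT N x⁻¹ y⁻¹ - TT N x y⁻¹ - TT N x⁻¹ y := by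
  have : TT N x y + TT N x⁻¹ y⁻¹ - TT N x y⁻¹ - TT N x⁻¹ y
     = ∑ q ∈ quads N, (x ^ q.1.2 - x⁻¹ ^ q.1.2) * (y ^ q.2.2 - y⁻¹ ^ q.2.2) := by
    simp only [TT, ← Finset.sum_add_distrib, ← Finset.sum_sub_distrib]
    refine Finset.sum_congr rfl fun q _ => by ring
  rw [this]
  simp only [br, Finset.sum_mul_sum]
  simp_rw [← Finset.sum_product']
  rw [Finset.sum_sigma']
  symm
  refine Finset.sum_nbij' 
      (fun q => ⟨(q.1.1 * q.1.2, q.2.1 * q.2.2), (q.1.2, q.2.2)⟩) 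
      (fun p => ((p.1.1 / p.2.1, p.2.1), (p.1.2 / p.2.2, p.2.2))) ?_ ?_ ?_ ?_ ?_
  · rintro ⟨⟨m, d⟩, n, e⟩ h
    simp only [mem_quads] at h
    obtain ⟨⟨h1, h2, h3, h4⟩, h5⟩ := h
    simp only [mem_sigma, mem_product, HasAntidiagonal.mem_antidiagonal, Nat.mem_divisors]
    have := Nat.mul_pos h1 h2
    have := Nat.mul_pos h3 h4
    exact ⟨h5, ⟨Dvd.intro_left _ rfl, by omega⟩, ⟨Dvd.intro_left _ rfl, by omega⟩⟩
  · rintro ⟨⟨a, b⟩, d, e⟩ h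
    simp only [mem_sigma, mem_product, HasAntidiagonal.mem_antidiagonal, Nat.mem_divisors] at h
    obtain ⟨h1, ⟨h2, h3⟩, h4, h5⟩ := h
    simp only [mem_quads]
    have h6 : 1 ≤ d := Nat.pos_of_dvd_of_pos h2 (by omega)
    have h7 : 1 ≤ e := Nat.pos_of_dvd_of_pos h4 (by omega)
    refine ⟨⟨Nat.div_pos (Nat.le_of_dvd (by omega) h2) h6, h6, 
      Nat.div_pos (Nat.le_of_dvd (by omega) h4) h7, h7⟩, ?_⟩
    rw [Nat.div_mul_cancel h2, Nat.div_mul_cancel h4, h1]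
  · rintro ⟨⟨m, d⟩, n, e⟩ h
    simp only [mem_quads] at h
    obtain ⟨⟨h1, h2, h3, h4⟩, h5⟩ := h
    simp [Nat.mul_div_cancel _ h2, Nat.mul_div_cancel _ h4]
  · rintro ⟨⟨a, b⟩, d, e⟩ h
    simp only [mem_sigma, mem_product, HasAntidiagonal.mem_antidiagonal, Nat.mem_divisors] at h
    obtain ⟨h1, ⟨h2, h3⟩, h4, h5⟩ := h
    simp [Nat.div_mul_cancel h2, Nat.div_mul_cancel h4]
  · rintro ⟨⟨m, d⟩, n, e⟩ h
    rfl

theorem mm_aux (x y : K) (d : ℕ) (hd : 1 ≤ d) :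
    (x - y) * ∑ c ∈ Ico 1 d, x ^ (d - c) * y ^ c = y * x ^ d - x * y ^ d := by
  induction d, hd using Nat.le_induction with
  | base => simp; ring
  | succ n hn ih =>
    have : ∑ c ∈ Ico 1 n, x ^ (n + 1 - c) * y ^ c = x * ∑ c ∈ Ico 1 n, x ^ (n - c) * y ^ c := by
      rw [Finset.mul_sum]
      refine Finset.sum_congr rfl fun c hc => ?_
      rw [mem_Ico] at hc
      rw [show n + 1 - c = (n - c) + 1 by omega]; ring
    rw [Finset.sum_Ico_succ_top hn, this, mul_add, mul_left_comm, ih]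
    rw [show n + 1 - n = 1 by omega]; ring

def DD (N : ℕ) (x : K) : K := ∑ d ∈ N.divisors, x ^ d

variable [CharZero K]

theorem sigma_br (N : ℕ) (u v w : K) (h : u * v * w = 1) (hu : u ≠ 1) :
    (u + 1) / (2 * (u - 1)) * (br N v + br N w) =
      - (1 / 2) * (DD N v + DD N w⁻¹ + DD N v⁻¹ + DD N w) - MM N v w⁻¹ - MM N v⁻¹ w := by
  simp only [br, DD, MM, ← Finset.sum_add_distrib, Finset.mul_sum, ← Finset.sum_sub_distrib]
  refine Finset.sum_congr rfl fun d hd => ?_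
  have hd1 : 1 ≤ d := Nat.pos_of_mem_divisors hd
  have hu0 : u ≠ 0 := by rintro rfl; simp at h
  have hv0 : v ≠ 0 := by rintro rfl; simp at h
  have hw : w⁻¹ = u * v := by rw [eq_comm]; exact eq_inv_of_mul_eq_one_left h
  have hw' : w = u⁻¹ * v⁻¹ := by rw [← inv_inv w, hw, mul_inv]
  have h1 := mm_aux v w⁻¹ d hd1
  have h2 := mm_aux v⁻¹ w d hd1
  set m1 := ∑ c ∈ Ico 1 d, v ^ (d - c) * w⁻¹ ^ c
  set m2 := ∑ c ∈ Ico 1 d, v⁻¹ ^ (d - c) * w ^ c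
  generalize hA : v ^ d = A at *
  generalize hB : w⁻¹ ^ d = B at *
  generalize hC : v⁻¹ ^ d = C at *
  generalize hD : w ^ d = D at *
  have h1' : (1 - u) * m1 = u * A - B := by
    rw [hw] at h1
    apply mul_left_cancel₀ hv0
    linear_combination h1
  have h2' : (u - 1) * m2 = C - u * D := by
    rw [hw'] at h2
    field_simp at h2
    linear_combination h2
  have hu1 : u - 1 ≠ 0 := sub_ne_zero.mpr hu
  have h2u : 2 * (u - 1) ≠ 0 := mul_ne_zero two_ne_zero hu1
  rw [div_mul_eq_mul_div, div_eq_iff h2u]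
  linear_combination -2 * h1' + 2 * h2'

theorem master (N : ℕ) (u v w : K) (h : u * v * w = 1) (hu : u ≠ 1) (hv : v ≠ 1) (hw : w ≠ 1) :
    ∑ p ∈ antidiagonal N, br p.1 u * br p.2 v + ∑ p ∈ antidiagonal N, br p.1 v * br p.2 w
     + ∑ p ∈ antidiagonal N, br p.1 w * br p.2 u
     - ((u + 1) / (2 * (u - 1)) * (br N v + br N w)
      + (v + 1) / (2 * (v - 1)) * (br N w + br N u) + (w + 1) / (2 * (w - 1)) * (br N u + br N v))
     = ∑ d ∈ N.divisors, ((N / d : ℕ) : K) * (u ^ d + u⁻¹ ^ d + v ^ d + v⁻¹ ^ d + w ^ d + w⁻¹ ^ d) := by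
  have hR : ∑ d ∈ N.divisors, ((N / d : ℕ) : K) * (u ^ d + u⁻¹ ^ d + v ^ d + v⁻¹ ^ d + w ^ d + w⁻¹ ^ d)
     = RR N u + RR N u⁻¹ + RR N v + RR N v⁻¹ + RR N w + RR N w⁻¹ 
      + (DD N u + DD N u⁻¹ + DD N v + DD N v⁻¹ + DD N w + DD N w⁻¹) := by
    simp only [RR, DD, ← Finset.sum_add_distrib]
    refine Finset.sum_congr rfl fun d hd => by ring
  have e1 : u * v = w⁻¹ := eq_inv_of_mul_eq_one_left h
  have e2 : v * w = u⁻¹ := eq_inv_of_mul_eq_one_left (by linear_combination h)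
  have e3 : w * u = v⁻¹ := eq_inv_of_mul_eq_one_left (by linear_combination h)
  have e1' : u⁻¹ * v⁻¹ = w := by rw [← mul_inv, e1, inv_inv]
  have e2' : v⁻¹ * w⁻¹ = u := by rw [← mul_inv, e2, inv_inv]
  have e3' : w⁻¹ * u⁻¹ = v := by rw [← mul_inv, e3, inv_inv]
  have f1 := TT_eq2 N u v
  have f2 := TT_eq2 N v w
  have f3 := TT_eq2 N w u
  have f4 := TT_eq2 N u⁻¹ v⁻¹
  have f5 := TT_eq2 N v⁻¹ w⁻¹
  have f6 := TT_eq2 N w⁻¹ u⁻¹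
  rw [e1] at f1
  rw [e2] at f2
  rw [e3] at f3
  rw [e1'] at f4
  rw [e2'] at f5
  rw [e3'] at f6
  rw [hR, sum_br, sum_br, sum_br, sigma_br N u v w h hu, sigma_br N v w u (by linear_combination h) hv,
    sigma_br N w u v (by linear_combination h) hw, f1, f2, f3, f4, f5, f6,
    TT_eq1 N u v⁻¹, TT_eq1 N u⁻¹ v, TT_eq1 N v w⁻¹, TT_eq1 N v⁻¹ w, TT_eq1 N w u⁻¹, TT_eq1 N w⁻¹ u]
  ring

end comb

/-! ### Power series part -/

/-- `q`-expansion coefficients of the Eisenstein series -/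
noncomputable def ec (k N : ℕ) : ℂ :=
  if Even k ∧ 2 ≤ k then
    (2 / (Nat.factorial (k - 1) : ℂ)) *
      (if N = 0 then -(bernoulli k : ℂ) / (2 * k) else ∑ d ∈ N.divisors, (d : ℂ) ^ (k - 1))
  else 0

noncomputable def ZZ (N : ℕ) : PowerSeries ℂ := PowerSeries.mk fun n => ec (n + 1) N
noncomputable def HH (N : ℕ) : PowerSeries ℂ := PowerSeries.mk fun n => N * ec n N / n

theorem ec_odd {k N : ℕ} (h : ¬ Even k) : ec k N = 0 := by simp [ec, h]

noncomputable abbrev ee (c : ℂ) : PowerSeries ℂ := PowerSeries.rescale c (PowerSeries.exp ℂ)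

theorem coeff_ee (c : ℂ) (n : ℕ) : PowerSeries.coeff n (ee c) = c ^ n / n.factorial := by
  simp [ee, PowerSeries.coeff_rescale, PowerSeries.coeff_exp, div_eq_mul_inv]

theorem ee_mul (a b : ℂ) : ee a * ee b = ee (a + b) := PowerSeries.exp_mul_exp_eq_exp_add a b

theorem ee_zero : ee 0 = 1 := by
  simp [ee]

theorem ee_pow (a : ℂ) (d : ℕ) : ee a ^ d = ee (d * a) := by
  induction d with
  | zero => simp [ee_zero]
  | succ n ih => rw [pow_succ, ih, ee_mul]; congr 1; push_cast; ring

theorem rescale_ee (a b : ℂ) : PowerSeries.rescale a (ee b) = ee (b * a) := by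
  rw [PowerSeries.rescale_rescale]

theorem ZZ_pos (N : ℕ) (hN : N ≠ 0) :
    ZZ N = ∑ d ∈ N.divisors, (ee d - ee (-d)) := by
  ext n
  simp only [ZZ, PowerSeries.coeff_mk, map_sum, map_sub, coeff_ee]
  rcases Nat.even_or_odd (n + 1) with h | h
  · have hn : Odd n := by
      rcases Nat.even_or_odd n with h' | h'
      · exact absurd h (Nat.not_even_iff_odd.mpr h'.add_one)
      · exact h'
    have h2 : 2 ≤ n + 1 := by
      have := hn.pos
      omega
    simp only [ec, h, h2, hN, if_false, and_self, if_true, Nat.add_sub_cancel, Finset.mul_sum]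
    refine Finset.sum_congr rfl fun d _ => ?_
    rw [hn.neg_pow]; ring
  · have hn : Even n := by
      rcases Nat.even_or_odd n with h' | h'
      · exact h'
      · exact absurd h (Nat.not_odd_iff_even.mpr h'.add_one)
    rw [ec_odd (Nat.not_even_iff_odd.mpr h)]
    symm
    refine Finset.sum_eq_zero fun d _ => ?_
    rw [hn.neg_pow]; ring

theorem HH_zero : HH 0 = 0 := by
  ext n; simp [HH]

theorem HH_pos (N : ℕ) (hN : N ≠ 0) :
    HH N = ∑ d ∈ N.divisors, PowerSeries.C ((N / d : ℕ) : ℂ) * (ee d + ee (-d)) 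
      - PowerSeries.C (∑ d ∈ N.divisors, 2 * ((N / d : ℕ) : ℂ)) := by
  ext n
  simp only [HH, PowerSeries.coeff_mk, map_sum, map_sub, map_add, coeff_ee, PowerSeries.coeff_C_mul,
    PowerSeries.coeff_C]
  rcases Nat.eq_zero_or_pos n with rfl | hn0
  · simp [mul_comm, one_add_one_eq_two]
  simp only [hn0.ne', if_false]
  rcases Nat.even_or_odd n with h | h
  · have h2 : 2 ≤ n := by
      rcases h with ⟨m, rfl⟩
      omega
    obtain ⟨m, rfl⟩ : ∃ m, n = m + 1 := ⟨n - 1, by omega⟩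
    simp only [ec, h, h2, hN, if_false, and_self, if_true, Nat.add_sub_cancel, Finset.mul_sum, 
      Finset.sum_div]
    rw [Finset.sum_const_zero, sub_zero]
    refine Finset.sum_congr rfl fun d hd => ?_
    have hd0 : (d : ℂ) ≠ 0 := by
      have := Nat.pos_of_mem_divisors hd
      exact_mod_cast this.ne'
    rw [h.neg_pow, Nat.cast_div (Nat.dvd_of_mem_divisors hd) hd0, Nat.factorial_succ]
    have := Nat.factorial_ne_zero m
    have : (m.factorial : ℂ) ≠ 0 := by exact_mod_cast this
    have : ((m + 1 : ℕ) : ℂ) ≠ 0 := by exact_mod_cast m.succ_ne_zero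
    push_cast at *
    field_simp
    ring
  · rw [ec_odd (Nat.not_even_iff_odd.mpr h)]
    simp [h.neg_pow, neg_div]

theorem ZZ_zero : 2 * (ee 1 - 1) * (1 - PowerSeries.X * ZZ 0) = PowerSeries.X * (ee 1 + 1) := by
  have h1 : (1 - PowerSeries.X * ZZ 0) * 2 = 2 * bernoulliPowerSeries ℂ + PowerSeries.X := by
    rw [show (2 : PowerSeries ℂ) = PowerSeries.C 2 from rfl, mul_comm _ (PowerSeries.C 2)]
    ext n
    rcases n with _ | n
    · simp [bernoulliPowerSeries, PowerSeries.coeff_zero_eq_constantCoeff]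
    · simp only [PowerSeries.coeff_C_mul, map_add, map_sub, PowerSeries.coeff_succ_X_mul, ZZ, PowerSeries.coeff_mk,
        bernoulliPowerSeries, PowerSeries.coeff_one, PowerSeries.coeff_X]
      rcases Nat.even_or_odd (n + 1) with h | h
      · have h2 : 2 ≤ n + 1 := by
          rcases h with ⟨m, h⟩
          omega
        have h3 : n ≠ 0 := by omega
        have : (n.factorial : ℂ) ≠ 0 := by exact_mod_cast Nat.factorial_ne_zero n
        have : ((n : ℂ) + 1) ≠ 0 := by exact_mod_cast n.succ_ne_zero
        simp [ec, h, h2, h3, Nat.factorial_succ]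
        field_simp
      · rw [ec_odd (Nat.not_even_iff_odd.mpr h)]
        rcases Nat.eq_zero_or_pos n with rfl | hn
        · simp [bernoulli_one]
          norm_num
        · rw [bernoulli_eq_zero_of_odd h (by omega)]
          simp [hn.ne']
  have h2 := bernoulliPowerSeries_mul_exp_sub_one ℂ
  have h3 : ee 1 = PowerSeries.exp ℂ := by simp [ee]
  rw [h3]
  linear_combination (PowerSeries.exp ℂ - 1) * h1 + 2 * h2

theorem ZZ_neg (N : ℕ) (a : ℂ) : 
    PowerSeries.rescale (-a) (ZZ N) = - PowerSeries.rescale a (ZZ N) := by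
  ext n
  simp only [PowerSeries.coeff_rescale, map_neg, ZZ, PowerSeries.coeff_mk]
  rcases Nat.even_or_odd n with h | h
  · rw [ec_odd (Nat.not_even_iff_odd.mpr h.add_one)]; simp
  · rw [h.neg_pow]; ring

theorem anti_aux {K : Type*} [Field K] (N : ℕ) (hN : N ≠ 0) (f f' g g' : ℕ → K) 
    (hf : ∀ n, n ≠ 0 → f n = f' n) (hg : ∀ n, n ≠ 0 → g n = g' n) (hf0 : f' 0 = 0) (hg0 : g' 0 = 0) :
    ∑ p ∈ antidiagonal N, f p.1 * g p.2 =
      ∑ p ∈ antidiagonal N, f' p.1 * g' p.2 + f 0 * g' N + f' N * g 0 := by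
  obtain ⟨M, rfl⟩ : ∃ M, N = M + 1 := ⟨N - 1, by omega⟩
  have e : ∀ F G : ℕ → K, ∑ p ∈ antidiagonal (M + 1), F p.1 * G p.2 
      = ∑ k ∈ range M, F (k + 1) * G (M + 1 - (k + 1)) + F 0 * G (M + 1) + F (M + 1) * G 0 := by
    intro F G
    rw [Finset.Nat.sum_antidiagonal_eq_sum_range_succ (fun i j => F i * G j),
      Finset.sum_range_succ, Finset.sum_range_succ']
    simp
  rw [e, e, hf0, hg0, hf _ hN, hg _ hN]
  have : ∑ k ∈ range M, f (k + 1) * g (M + 1 - (k + 1)) 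
     = ∑ k ∈ range M, f' (k + 1) * g' (M + 1 - (k + 1)) := by
    refine Finset.sum_congr rfl fun k hk => ?_
    rw [mem_range] at hk
    rw [hf _ (by omega), hg _ (by omega)]
  rw [this]; ring

noncomputable abbrev FF := FractionRing (PowerSeries ℂ)
noncomputable abbrev ph : PowerSeries ℂ →+* FF := algebraMap _ _

theorem ph_inj : Function.Injective ph := IsFractionRing.injective _ _

instance : CharZero FF := by
  have h : CharZero (PowerSeries ℂ) := 
    charZero_of_injective_ringHom (f := (PowerSeries.C : ℂ →+* PowerSeries ℂ)) PowerSeries.C_injective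
  exact charZero_of_injective_ringHom (f := ph) ph_inj

theorem ph_inv (a : ℂ) : (ph (ee a))⁻¹ = ph (ee (-a)) := by
  symm
  apply eq_inv_of_mul_eq_one_left
  rw [← map_mul, ee_mul]
  simp [ee_zero]

theorem ph_ne (a : ℂ) (ha : a ≠ 0) : ph (ee a) ≠ 1 := by
  intro h
  have h1 : ee a = 1 := ph_inj (by rw [h, map_one])
  have := congrArg (PowerSeries.coeff 1) h1
  rw [coeff_ee] at this
  simp [PowerSeries.coeff_one, ha] at this

theorem ph_ZZ (N : ℕ) (hN : N ≠ 0) (a : ℂ) :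
    ph (PowerSeries.rescale a (ZZ N)) = br N (ph (ee a)) := by
  rw [ZZ_pos N hN, br, map_sum, map_sum]
  refine Finset.sum_congr rfl fun d _ => ?_
  rw [map_sub, map_sub, rescale_ee, rescale_ee, ph_inv, ← map_pow ph, ← map_pow ph, ee_pow, ee_pow]
  rw [show -(d : ℂ) * a = d * -a by ring]

theorem ph_ZZ0 (a : ℂ) (ha : a ≠ 0) :
    ph (PowerSeries.rescale a (ZZ 0)) = 1 / (ph (PowerSeries.C a) * ph PowerSeries.X) 
      - (ph (ee a) + 1) / (2 * (ph (ee a) - 1)) := by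
  have h := congrArg (fun f => ph (PowerSeries.rescale a f)) ZZ_zero
  simp only [map_mul, map_sub, map_add, map_one, rescale_ee, PowerSeries.rescale_X, one_mul, map_ofNat] at h
  have h1 : ph (ee a) - 1 ≠ 0 := sub_ne_zero.mpr (ph_ne a ha)
  have h2 : ph (PowerSeries.C a) ≠ 0 := by
    rw [Ne, map_eq_zero_iff _ ph_inj]
    intro h
    exact ha (by simpa using congrArg PowerSeries.constantCoeff h)
  have h3 : ph PowerSeries.X ≠ 0 := by
    rw [Ne, map_eq_zero_iff _ ph_inj]
    exact PowerSeries.X_ne_zero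
  field_simp
  linear_combination -h

theorem ph_HH (N : ℕ) (hN : N ≠ 0) (a : ℂ) :
    ph (PowerSeries.rescale a (HH N)) = 
      ∑ d ∈ N.divisors, ((N / d : ℕ) : FF) * (ph (ee a) ^ d + (ph (ee a))⁻¹ ^ d) 
       - ph (PowerSeries.C (∑ d ∈ N.divisors, 2 * ((N / d : ℕ) : ℂ))) := by
  rw [HH_pos N hN, map_sub, map_sub, map_sum, map_sum]
  congr 1
  · refine Finset.sum_congr rfl fun d _ => ?_
    rw [map_mul, map_mul, map_add, map_add, rescale_ee, rescale_ee, ph_inv, ← map_pow ph, ← map_pow ph, ee_pow, ee_pow]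
    simp only [map_natCast]
    rw [show -(d : ℂ) * a = d * -a by ring]
  · congr 1
    ext n
    simp only [PowerSeries.coeff_rescale, PowerSeries.coeff_C]
    split_ifs with h <;> simp [h]

/-- the cyclic identity in the fraction field -/
theorem cyc (N : ℕ) (a b c : ℂ) (habc : a + b + c = 0) (ha : a ≠ 0) (hb : b ≠ 0) (hc : c ≠ 0) :
    ∃ κ : ℂ, 
     ∑ p ∈ antidiagonal N, ph (PowerSeries.rescale a (ZZ p.1)) * ph (PowerSeries.rescale b (ZZ p.2)) 
   + ∑ p ∈ antidiagonal N, ph (PowerSeries.rescale b (ZZ p.1)) * ph (PowerSeries.rescale c (ZZ p.2))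
   + ∑ p ∈ antidiagonal N, ph (PowerSeries.rescale c (ZZ p.1)) * ph (PowerSeries.rescale a (ZZ p.2)) 
   = ph (PowerSeries.rescale a (HH N)) + ph (PowerSeries.rescale b (HH N)) 
     + ph (PowerSeries.rescale c (HH N)) + ph (PowerSeries.C κ)
     + 1 / (ph (PowerSeries.C a) * ph PowerSeries.X) * 
        (ph (PowerSeries.rescale b (ZZ N)) + ph (PowerSeries.rescale c (ZZ N)))
     + 1 / (ph (PowerSeries.C b) * ph PowerSeries.X) * 
        (ph (PowerSeries.rescale c (ZZ N)) + ph (PowerSeries.rescale a (ZZ N)))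
     + 1 / (ph (PowerSeries.C c) * ph PowerSeries.X) * 
        (ph (PowerSeries.rescale a (ZZ N)) + ph (PowerSeries.rescale b (ZZ N))) := by
  have huvw : ph (ee a) * ph (ee b) * ph (ee c) = 1 := by
    rw [← map_mul, ← map_mul, ee_mul, ee_mul, habc, ee_zero, map_one]
  have h2 : ∀ t : ℂ, t ≠ 0 → ph (PowerSeries.C t) ≠ 0 := by
    intro t ht
    rw [Ne, map_eq_zero_iff _ ph_inj]
    intro h
    exact ht (by simpa using congrArg PowerSeries.constantCoeff h)
  have h3 : ph PowerSeries.X ≠ 0 := by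
    rw [Ne, map_eq_zero_iff _ ph_inj]
    exact PowerSeries.X_ne_zero
  have hs : ph (PowerSeries.C a) + ph (PowerSeries.C b) + ph (PowerSeries.C c) = 0 := by
    rw [← map_add, ← map_add, ← map_add, ← map_add, habc, map_zero, map_zero]
  rcases eq_or_ne N 0 with rfl | hN
  · refine ⟨-1 / 4, ?_⟩
    have h4 : ph (PowerSeries.C (-1 / 4)) = -1 / 4 := by
      rw [eq_div_iff (by norm_num), ← map_ofNat ph 4, ← map_mul, 
        show (4 : PowerSeries ℂ) = PowerSeries.C 4 from rfl, ← map_mul]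
      norm_num
    simp only [Finset.Nat.antidiagonal_zero, Finset.sum_singleton, HH_zero, map_zero, 
      ph_ZZ0 a ha, ph_ZZ0 b hb, ph_ZZ0 c hc, h4]
    have e1 := sub_ne_zero.mpr (ph_ne a ha)
    have e2 := sub_ne_zero.mpr (ph_ne b hb)
    have e3 := sub_ne_zero.mpr (ph_ne c hc)
    have g1 := h2 a ha
    have g2 := h2 b hb
    have g3 := h2 c hc
    generalize ph (ee a) = u at *
    generalize ph (ee b) = v at *
    generalize ph (ee c) = w at *
    generalize ph (PowerSeries.C a) = A at *
    generalize ph (PowerSeries.C b) = B at *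
    generalize ph (PowerSeries.C c) = D at *
    generalize ph PowerSeries.X = x at *
    have k1 : (u + 1) / (2 * (u - 1)) * ((v + 1) / (2 * (v - 1))) 
       + (v + 1) / (2 * (v - 1)) * ((w + 1) / (2 * (w - 1)))
       + (w + 1) / (2 * (w - 1)) * ((u + 1) / (2 * (u - 1))) = -1 / 4 := by
      field_simp
      linear_combination 16 * huvw
    have k2 : 1 / (A * x) * (1 / (B * x)) + 1 / (B * x) * (1 / (D * x)) + 1 / (D * x) * (1 / (A * x)) = 0 := by
      field_simp
      linear_combination hs
    linear_combination k1 - k2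
  · refine ⟨3 * ∑ d ∈ N.divisors, 2 * ((N / d : ℕ) : ℂ), ?_⟩
    have hm := master N _ _ _ huvw (ph_ne a ha) (ph_ne b hb) (ph_ne c hc)
    have hx : ∀ s t : ℂ, s ≠ 0 → t ≠ 0 → 
      ∑ p ∈ antidiagonal N, ph (PowerSeries.rescale s (ZZ p.1)) * ph (PowerSeries.rescale t (ZZ p.2)) 
       = ∑ p ∈ antidiagonal N, br p.1 (ph (ee s)) * br p.2 (ph (ee t))
        + (1 / (ph (PowerSeries.C s) * ph PowerSeries.X) 
            - (ph (ee s) + 1) / (2 * (ph (ee s) - 1))) * br N (ph (ee t))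
        + br N (ph (ee s)) * (1 / (ph (PowerSeries.C t) * ph PowerSeries.X) 
            - (ph (ee t) + 1) / (2 * (ph (ee t) - 1))) := by
      intro s t hs ht
      rw [← ph_ZZ0 s hs, ← ph_ZZ0 t ht]
      exact anti_aux N hN (fun n => ph (PowerSeries.rescale s (ZZ n))) (fun n => br n (ph (ee s)))
        (fun n => ph (PowerSeries.rescale t (ZZ n))) (fun n => br n (ph (ee t)))
        (fun n hn => ph_ZZ n hn s) (fun n hn => ph_ZZ n hn t) (by simp [br]) (by simp [br])
    have hsum : ∑ d ∈ N.divisors, ((N / d : ℕ) : FF) * (ph (ee a) ^ d + (ph (ee a))⁻¹ ^ d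
          + ph (ee b) ^ d + (ph (ee b))⁻¹ ^ d + ph (ee c) ^ d + (ph (ee c))⁻¹ ^ d) 
       = ∑ d ∈ N.divisors, ((N / d : ℕ) : FF) * (ph (ee a) ^ d + (ph (ee a))⁻¹ ^ d) 
       + ∑ d ∈ N.divisors, ((N / d : ℕ) : FF) * (ph (ee b) ^ d + (ph (ee b))⁻¹ ^ d)
       + ∑ d ∈ N.divisors, ((N / d : ℕ) : FF) * (ph (ee c) ^ d + (ph (ee c))⁻¹ ^ d) := by
      simp only [← Finset.sum_add_distrib]
      exact Finset.sum_congr rfl fun d _ => by ring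
    rw [hsum] at hm
    rw [hx a b ha hb, hx b c hb hc, hx c a hc ha, ph_HH N hN, ph_HH N hN, ph_HH N hN, 
      ph_ZZ N hN, ph_ZZ N hN, ph_ZZ N hN]
    rw [map_mul, map_mul, map_ofNat, map_ofNat]
    linear_combination hm

/-- coefficient form -/
noncomputable def pq (N n : ℕ) (a b : ℂ) : ℂ :=
  ∑ x ∈ antidiagonal n, (∑ p ∈ antidiagonal N, ec (x.1 + 1) p.1 * ec (x.2 + 1) p.2) * a ^ x.1 * b ^ x.2

theorem pq_eq (N n : ℕ) (a b : ℂ) : pq N n a b = PowerSeries.coeff n 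
    (∑ p ∈ antidiagonal N, PowerSeries.rescale a (ZZ p.1) * PowerSeries.rescale b (ZZ p.2)) := by
  simp only [pq, map_sum, PowerSeries.coeff_mul, PowerSeries.coeff_rescale, ZZ, PowerSeries.coeff_mk]
  rw [Finset.sum_comm]
  refine Finset.sum_congr rfl fun x _ => ?_
  rw [Finset.sum_mul, Finset.sum_mul]
  exact Finset.sum_congr rfl fun p _ => by ring

theorem pq_neg_right (N n : ℕ) (a b : ℂ) : pq N n a (-b) = - pq N n a b := by
  simp only [pq_eq, ZZ_neg, mul_neg, Finset.sum_neg_distrib, map_neg]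

theorem pq_neg_left (N n : ℕ) (a b : ℂ) : pq N n (-a) b = - pq N n a b := by
  simp only [pq_eq, ZZ_neg, neg_mul, Finset.sum_neg_distrib, map_neg]

theorem pq_comm (N n : ℕ) (a b : ℂ) : pq N n a b = pq N n b a := by
  simp only [pq_eq]
  congr 1
  rw [← Finset.Nat.sum_antidiagonal_swap]
  exact Finset.sum_congr rfl fun p _ => mul_comm _ _

theorem coeff_identity (N n : ℕ) (hn : n ≠ 0) (hev : Even n) (a b : ℂ) (ha : a ≠ 0) (hb : b ≠ 0) (hab : a + b ≠ 0) :
    a * b * (a + b) * (pq N n (a + b) b + pq N n (a + b) a - pq N n a b 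
      + N * ec n N / n * (a ^ n + b ^ n + (a + b) ^ n))
    = ec (n + 2) N * ((a + b) * b * ((a + b) ^ (n + 1) - b ^ (n + 1)) + (a + b) * a * ((a + b) ^ (n + 1) - a ^ (n + 1))
        + a * b * (a ^ (n + 1) + b ^ (n + 1))) := by
  obtain ⟨κ, h⟩ := cyc N a b (-(a + b)) (by ring) ha hb (neg_ne_zero.mpr hab)
  have h2 : ∀ t : ℂ, t ≠ 0 → ph (PowerSeries.C t) ≠ 0 := by
    intro t ht
    rw [Ne, map_eq_zero_iff _ ph_inj]
    intro h
    exact ht (by simpa using congrArg PowerSeries.constantCoeff h)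
  have h3 : ph PowerSeries.X ≠ 0 := by
    rw [Ne, map_eq_zero_iff _ ph_inj]
    exact PowerSeries.X_ne_zero
  simp only [← map_mul ph, ← map_sum ph] at h
  set S1 := ∑ p ∈ antidiagonal N, PowerSeries.rescale a (ZZ p.1) * PowerSeries.rescale b (ZZ p.2) with hS1
  set S2 := ∑ p ∈ antidiagonal N, PowerSeries.rescale b (ZZ p.1) * PowerSeries.rescale (-(a + b)) (ZZ p.2) with hS2
  set S3 := ∑ p ∈ antidiagonal N, PowerSeries.rescale (-(a + b)) (ZZ p.1) * PowerSeries.rescale a (ZZ p.2) with hS3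
  set Za := PowerSeries.rescale a (ZZ N) with hZa
  set Zb := PowerSeries.rescale b (ZZ N) with hZb
  set Zc := PowerSeries.rescale (-(a + b)) (ZZ N) with hZc
  set Ha := PowerSeries.rescale a (HH N) with hHa
  set Hb := PowerSeries.rescale b (HH N) with hHb
  set Hc := PowerSeries.rescale (-(a + b)) (HH N) with hHc
  have key : PowerSeries.X * (PowerSeries.C (a * b * (-(a + b))) * (S1 + S2 + S3 - Ha - Hb - Hc)) 
     = PowerSeries.C (a * b * (-(a + b)) * κ) * PowerSeries.X
      + PowerSeries.C (b * (-(a + b))) * (Zb + Zc) + PowerSeries.C (-(a + b) * a) * (Zc + Za)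
      + PowerSeries.C (a * b) * (Za + Zb) := by
    apply ph_inj
    have g1 := h2 a ha
    have g2 := h2 b hb
    have g3 := h2 _ (neg_ne_zero.mpr hab)
    simp only [map_mul, map_add, map_sub] at h ⊢
    generalize ph (PowerSeries.C (-(a + b))) = D at *
    generalize ph (PowerSeries.C a) = A at *
    generalize ph (PowerSeries.C b) = B at *
    generalize ph PowerSeries.X = x at *
    have h' := congrArg (fun f => x * (A * B * D) * f) h
    field_simp at h'
    linear_combination h'
  have kc := congrArg (PowerSeries.coeff (n + 1)) key
  have c1 : PowerSeries.coeff n S1 = pq N n a b := (pq_eq ..).symm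
  have c2 : PowerSeries.coeff n S2 = - pq N n (a + b) b := by
    rw [pq_comm, ← pq_neg_right]; exact (pq_eq ..).symm
  have c3 : PowerSeries.coeff n S3 = - pq N n (a + b) a := by
    rw [← pq_neg_left]; exact (pq_eq ..).symm
  have hodd : Odd (n + 1) := hev.add_one
  simp only [PowerSeries.coeff_succ_X_mul, PowerSeries.coeff_C_mul, map_add, map_sub, c1, c2, c3, 
    PowerSeries.coeff_X, hZa, hZb, hZc, hHa, hHb, hHc, ZZ, HH, PowerSeries.coeff_rescale, PowerSeries.coeff_mk,
    hodd.neg_pow, hev.neg_pow] at kc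
  rw [if_neg (by omega)] at kc
  rw [show n + 1 + 1 = n + 2 from rfl] at kc
  linear_combination kc

noncomputable def Pc (i j N : ℕ) : ℂ :=
  ∑ p ∈ antidiagonal N, ec i p.1 * ec j p.2 + (if i = 2 then N * ec j N / j else 0) + 
    (if j = 2 then N * ec i N / i else 0)

theorem binom1 (n : ℕ) (F : ℕ × ℕ → ℂ) (a b : ℂ) :
    ∑ y ∈ antidiagonal n, (∑ x ∈ antidiagonal n, (x.1.choose y.1 : ℂ) * F x) * a ^ y.1 * b ^ y.2 
     = ∑ x ∈ antidiagonal n, F x * (a + b) ^ x.1 * b ^ x.2 := by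
  simp only [Finset.sum_mul]
  rw [Finset.sum_comm]
  refine Finset.sum_congr rfl fun x hx => ?_
  rw [HasAntidiagonal.mem_antidiagonal] at hx
  rw [Finset.Nat.sum_antidiagonal_eq_sum_range_succ_mk, ← hx, add_pow, Finset.mul_sum, Finset.sum_mul]
  symm
  refine Finset.sum_subset_zero_on_sdiff (Finset.range_mono (by omega)) ?_ ?_
  · intro p hp
    rw [Finset.mem_sdiff, Finset.mem_range, Finset.mem_range] at hp
    rw [Nat.choose_eq_zero_of_lt (by omega)]; simp
  · intro p hp
    rw [mem_range] at hp
    rw [show x.1 + x.2 - p = (x.1 - p) + x.2 by omega, pow_add]; ring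

theorem binom2 (n : ℕ) (F : ℕ × ℕ → ℂ) (a b : ℂ) :
    ∑ y ∈ antidiagonal n, (∑ x ∈ antidiagonal n, (x.1.choose y.2 : ℂ) * F x) * a ^ y.1 * b ^ y.2 
     = ∑ x ∈ antidiagonal n, F x * (a + b) ^ x.1 * a ^ x.2 := by
  rw [add_comm a b, ← binom1 n F b a, ← Finset.Nat.sum_antidiagonal_swap]
  refine Finset.sum_congr rfl fun y _ => ?_
  simp only [Prod.fst_swap, Prod.snd_swap]; ring

theorem geom_anti (n : ℕ) (x y : ℂ) : 
    (x - y) * ∑ p ∈ antidiagonal n, x ^ p.1 * y ^ p.2 = x ^ (n + 1) - y ^ (n + 1) := by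
  rw [Finset.Nat.sum_antidiagonal_eq_sum_range_succ (fun i j => x ^ i * y ^ j), mul_comm, 
    ← geom_sum₂_mul]
  simp

theorem sum_Pc (N n : ℕ) (hn : 2 ≤ n) (a b : ℂ) :
    ∑ x ∈ antidiagonal n, Pc (x.1 + 1) (x.2 + 1) N * a ^ x.1 * b ^ x.2 
     = pq N n a b + N * ec n N / n * (a * b ^ (n - 1) + b * a ^ (n - 1)) := by
  have h1 : ∑ x ∈ antidiagonal n, (if x.1 + 1 = 2 then N * ec (x.2 + 1) N / (x.2 + 1 : ℕ) else 0) * a ^ x.1 * b ^ x.2 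
     = N * ec n N / n * (a * b ^ (n - 1)) := by
    rw [Finset.sum_eq_single (1, n - 1)]
    · simp only [if_true]
      rw [show n - 1 + 1 = n by omega]; ring
    · rintro ⟨i, j⟩ hx hne
      rw [HasAntidiagonal.mem_antidiagonal] at hx
      rw [if_neg]
      · simp
      · rintro h
        apply hne
        simp only at hx h
        ext <;> simp only <;> omega
    · intro h
      exact absurd (HasAntidiagonal.mem_antidiagonal.mpr (by simp only; omega)) h
  have h2 : ∑ x ∈ antidiagonal n, (if x.2 + 1 = 2 then N * ec (x.1 + 1) N / (x.1 + 1 : ℕ) else 0) * a ^ x.1 * b ^ x.2 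
     = N * ec n N / n * (b * a ^ (n - 1)) := by
    rw [Finset.sum_eq_single (n - 1, 1)]
    · simp only [if_true]
      rw [show n - 1 + 1 = n by omega]; ring
    · rintro ⟨i, j⟩ hx hne
      rw [HasAntidiagonal.mem_antidiagonal] at hx
      rw [if_neg]
      · simp
      · rintro h
        apply hne
        simp only at hx h
        ext <;> simp only <;> omega
    · intro h
      exact absurd (HasAntidiagonal.mem_antidiagonal.mpr (by simp only; omega)) h
  simp only [Pc, add_mul, Finset.sum_add_distrib, pq]
  rw [h1, h2]; ring

noncomputable def cc (N n : ℕ) (y : ℕ × ℕ) : ℂ :=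
  ∑ x ∈ antidiagonal n, ((x.1.choose y.1 : ℂ) + (x.1.choose y.2 : ℂ)) * 
     (Pc (x.1 + 1) (x.2 + 1) N - ec (n + 2) N)
   - Pc (y.1 + 1) (y.2 + 1) N + (-1) ^ (y.2 + 1) * ec (n + 2) N

theorem cc_gen (N n : ℕ) (hn : 2 ≤ n) (hev : Even n) (a b : ℂ) (ha : a ≠ 0) (hb : b ≠ 0) (hab : a + b ≠ 0) :
    ∑ y ∈ antidiagonal n, cc N n y * a ^ y.1 * b ^ y.2 = 0 := by
  have e1 : ∑ y ∈ antidiagonal n, cc N n y * a ^ y.1 * b ^ y.2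
     = ∑ y ∈ antidiagonal n, (∑ x ∈ antidiagonal n, (x.1.choose y.1 : ℂ) * Pc (x.1 + 1) (x.2 + 1) N) * a ^ y.1 * b ^ y.2 
     + ∑ y ∈ antidiagonal n, (∑ x ∈ antidiagonal n, (x.1.choose y.2 : ℂ) * Pc (x.1 + 1) (x.2 + 1) N) * a ^ y.1 * b ^ y.2
     - ∑ y ∈ antidiagonal n, (∑ x ∈ antidiagonal n, (x.1.choose y.1 : ℂ) * ec (n + 2) N) * a ^ y.1 * b ^ y.2 
     - ∑ y ∈ antidiagonal n, (∑ x ∈ antidiagonal n, (x.1.choose y.2 : ℂ) * ec (n + 2) N) * a ^ y.1 * b ^ y.2 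
     - ∑ x ∈ antidiagonal n, Pc (x.1 + 1) (x.2 + 1) N * a ^ x.1 * b ^ x.2
     - ec (n + 2) N * ∑ x ∈ antidiagonal n, a ^ x.1 * (-b) ^ x.2 := by
    rw [Finset.mul_sum]
    simp only [← Finset.sum_add_distrib, ← Finset.sum_sub_distrib]
    refine Finset.sum_congr rfl fun y _ => ?_
    have : cc N n y = (∑ x ∈ antidiagonal n, (x.1.choose y.1 : ℂ) * Pc (x.1 + 1) (x.2 + 1) N)
       + (∑ x ∈ antidiagonal n, (x.1.choose y.2 : ℂ) * Pc (x.1 + 1) (x.2 + 1) N)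
       - (∑ x ∈ antidiagonal n, (x.1.choose y.1 : ℂ) * ec (n + 2) N)
       - (∑ x ∈ antidiagonal n, (x.1.choose y.2 : ℂ) * ec (n + 2) N) 
       - Pc (y.1 + 1) (y.2 + 1) N + (-1) ^ (y.2 + 1) * ec (n + 2) N := by
      simp only [cc, ← Finset.sum_add_distrib, ← Finset.sum_sub_distrib]
      congr 2
      exact Finset.sum_congr rfl fun x _ => by ring
    rw [this, neg_pow b]
    ring
  rw [e1, binom1 n (fun x => Pc (x.1 + 1) (x.2 + 1) N), binom2 n (fun x => Pc (x.1 + 1) (x.2 + 1) N),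
    binom1 n (fun x => ec (n + 2) N), binom2 n (fun x => ec (n + 2) N), sum_Pc N n hn, sum_Pc N n hn, sum_Pc N n hn]
  have k := coeff_identity N n (by omega) hev a b ha hb hab
  have g1 := geom_anti n (a + b) b
  have g2 := geom_anti n (a + b) a
  have g3 := geom_anti n a (-b)
  rw [hev.add_one.neg_pow] at g3
  simp only [mul_assoc (ec (n + 2) N), ← Finset.mul_sum]
  set G1 := ∑ p ∈ antidiagonal n, (a + b) ^ p.1 * b ^ p.2
  set G2 := ∑ p ∈ antidiagonal n, (a + b) ^ p.1 * a ^ p.2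
  set G3 := ∑ p ∈ antidiagonal n, a ^ p.1 * (-b) ^ p.2
  obtain ⟨m, rfl⟩ : ∃ m, n = m + 1 := ⟨n - 1, by omega⟩
  simp only [Nat.add_sub_cancel]
  apply mul_left_cancel₀ (mul_ne_zero (mul_ne_zero ha hb) hab)
  linear_combination k - ec (m + 1 + 2) N * ((a + b) * b * g1 + (a + b) * a * g2 + a * b * g3)

theorem cc_zero (N n : ℕ) (hn : 2 ≤ n) (hev : Even n) (y : ℕ × ℕ) (hy : y ∈ antidiagonal n) : cc N n y = 0 := by
  set P : Polynomial ℂ := ∑ i ∈ range (n + 1), Polynomial.C (cc N n (i, n - i)) * Polynomial.X ^ i with hP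
  have hP0 : P = 0 := by
    apply Polynomial.eq_zero_of_infinite_isRoot
    refine Set.Infinite.mono (s := ({0, -1} : Set ℂ)ᶜ) ?_ ?_
    · intro a ha
      simp only [Set.mem_compl_iff, Set.mem_insert_iff, Set.mem_singleton_iff, not_or] at ha
      have := cc_gen N n hn hev a 1 ha.1 one_ne_zero (by
        intro h; exact ha.2 (eq_neg_of_add_eq_zero_left h))
      rw [Finset.Nat.sum_antidiagonal_eq_sum_range_succ_mk] at this
      simpa [hP, Polynomial.eval_finsetSum, Polynomial.IsRoot] using this
    · exact (Set.toFinite _).infinite_compl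
  rw [HasAntidiagonal.mem_antidiagonal] at hy
  have h1 := congrArg (fun p => Polynomial.coeff p y.1) hP0
  simp only [hP, Polynomial.finsetSum_coeff, Polynomial.coeff_C_mul, Polynomial.coeff_X_pow, Polynomial.coeff_zero] at h1
  rw [Finset.sum_eq_single y.1] at h1
  · simpa [← hy] using h1
  · intro i _ hi
    simp [Ne.symm hi]
  · intro h
    simp only [mem_range] at h
    omega

/-! ### Analytic part -/

theorem ec_bound (k : ℕ) : ∃ A B : ℝ, 0 ≤ A ∧ 0 ≤ B ∧ ∀ N : ℕ, ‖ec k N‖ ≤ A + B * (N : ℝ) ^ k := by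
  by_cases h : Even k ∧ 2 ≤ k
  · refine ⟨‖ec k 0‖, ‖(2 / (Nat.factorial (k - 1) : ℂ))‖, norm_nonneg _, norm_nonneg _, fun N => ?_⟩
    rcases eq_or_ne N 0 with rfl | hN
    · have : 0 ≤ ‖(2 / (Nat.factorial (k - 1) : ℂ))‖ * ((0 : ℕ) : ℝ) ^ k := by positivity
      linarith
    · have h1 : ‖∑ d ∈ N.divisors, (d : ℂ) ^ (k - 1)‖ ≤ (N : ℝ) ^ k := by
        calc ‖∑ d ∈ N.divisors, (d : ℂ) ^ (k - 1)‖ ≤ ∑ d ∈ N.divisors, (N : ℝ) ^ (k - 1) := by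
              refine norm_sum_le_of_le _ fun d hd => ?_
              rw [norm_pow, Complex.norm_natCast]
              have := Nat.divisor_le hd
              gcongr
          _ = N.divisors.card * (N : ℝ) ^ (k - 1) := by simp
          _ ≤ N * (N : ℝ) ^ (k - 1) := by
              have := Nat.card_divisors_le_self N
              gcongr
          _ = (N : ℝ) ^ k := by
              rw [← pow_succ']; congr 1; omega
      rw [show ec k N = (2 / (Nat.factorial (k - 1) : ℂ)) * ∑ d ∈ N.divisors, (d : ℂ) ^ (k - 1) by
        simp [ec, h, hN], norm_mul]
      have := mul_le_mul_of_nonneg_left h1 (norm_nonneg (2 / (Nat.factorial (k - 1) : ℂ)))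
      have := norm_nonneg (ec k 0)
      linarith
  · exact ⟨0, 0, le_rfl, le_rfl, fun N => by simp [ec, h]⟩

theorem bound_summable (A B ρ : ℝ) (k : ℕ) (h0 : 0 ≤ ρ) (h1 : ρ < 1) (m : ℕ) :
    Summable fun N : ℕ => (N : ℝ) ^ m * (A + B * (N : ℝ) ^ k) * ρ ^ N := by
  have hρ : ‖ρ‖ < 1 := by rwa [Real.norm_of_nonneg h0]
  have e1 := (summable_pow_mul_geometric_of_norm_lt_one m hρ).mul_left A
  have e2 := (summable_pow_mul_geometric_of_norm_lt_one (m + k) hρ).mul_left B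
  refine (e1.add e2).congr fun N => ?_
  rw [pow_add]; ring

theorem summable_ec (k m : ℕ) (q : ℂ) (hq : ‖q‖ < 1) :
    Summable fun N : ℕ => ‖(N : ℂ) ^ m * ec k N * q ^ N‖ := by
  obtain ⟨A, B, hA, hB, h⟩ := ec_bound k
  refine Summable.of_nonneg_of_le (fun _ => norm_nonneg _) (fun N => ?_)
    (bound_summable A B ‖q‖ k (norm_nonneg _) hq m)
  rw [norm_mul, norm_mul, norm_pow, norm_pow, Complex.norm_natCast]
  have := h N
  gcongr

theorem norm_q (τ : ℂ) : ‖Complex.exp (2 * Real.pi * Complex.I * τ)‖ = Real.exp (-(2 * Real.pi * τ.im)) := by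
  rw [Complex.norm_exp]
  congr 1
  simp

theorem norm_q_lt (τ : ℂ) (hτ : 0 < τ.im) : ‖Complex.exp (2 * Real.pi * Complex.I * τ)‖ < 1 := by
  rw [norm_q, Real.exp_lt_one_iff]
  have := Real.pi_pos
  have := mul_pos this hτ
  linarith

theorem Eis_eq (k : ℕ) (τ : ℂ) (hτ : 0 < τ.im) :
    Eis k τ = ∑' N : ℕ, ec k N * Complex.exp (2 * Real.pi * Complex.I * τ) ^ N := by
  have hs := (summable_ec k 0 _ (norm_q_lt τ hτ)).of_norm
  simp only [pow_zero, one_mul] at hs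
  rw [hs.tsum_eq_zero_add]
  by_cases h : Even k ∧ 2 ≤ k
  · simp only [Eis, ec, h, and_self, if_true, pow_zero, mul_one, Nat.add_eq_zero_iff, one_ne_zero, and_false, if_false]
    rw [mul_add, ← tsum_mul_left]
    simp only [mul_assoc]
  · simp [Eis, ec, h]

theorem Eis'_eq (k : ℕ) (τ : ℂ) (hτ : 0 < τ.im) :
    Eis' k τ = ∑' N : ℕ, N * ec k N * Complex.exp (2 * Real.pi * Complex.I * τ) ^ N := by
  obtain ⟨A, B, hA, hB, h⟩ := ec_bound k
  set ρ := Real.exp (-(Real.pi * τ.im)) with hρ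
  have hpi := Real.pi_pos
  have hρ1 : ρ < 1 := by
    rw [hρ, Real.exp_lt_one_iff]
    have := mul_pos hpi hτ
    linarith
  have hD : HasDerivAt (fun z => ∑' N : ℕ, ec k N * Complex.exp (2 * Real.pi * Complex.I * z) ^ N)
      (∑' N : ℕ, (2 * Real.pi * Complex.I) * (N * ec k N * Complex.exp (2 * Real.pi * Complex.I * τ) ^ N)) τ := by
    refine hasDerivAt_tsum_of_isPreconnected 
      (u := fun N : ℕ => 2 * Real.pi * ((N : ℝ) ^ 1 * (A + B * (N : ℝ) ^ k) * ρ ^ N)) 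
      (t := {z : ℂ | τ.im / 2 < z.im}) (y₀ := τ)
      (g := fun N z => ec k N * Complex.exp (2 * Real.pi * Complex.I * z) ^ N)
      (g' := fun N z => (2 * Real.pi * Complex.I) * (N * ec k N * Complex.exp (2 * Real.pi * Complex.I * z) ^ N))
      ((bound_summable A B ρ k (Real.exp_pos _).le hρ1 1).mul_left _) ?_ ?_ ?_ ?_ ?_ ?_ ?_
    · exact isOpen_lt continuous_const Complex.continuous_im
    · exact (convex_halfSpace_im_gt _).isPreconnected
    · intro N z _
      simp only [← Complex.exp_nat_mul]
      have h1 : HasDerivAt (fun z : ℂ => (N : ℂ) * (2 * Real.pi * Complex.I * z)) (N * (2 * Real.pi * Complex.I)) z := by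
        simpa using ((hasDerivAt_id z).const_mul (2 * Real.pi * Complex.I : ℂ)).const_mul (N : ℂ)
      convert! h1.cexp.const_mul (ec k N) using 1
      ring
    · intro N z hz
      simp only [Set.mem_setOf_eq] at hz
      have hz' : ‖Complex.exp (2 * Real.pi * Complex.I * z)‖ ≤ ρ := by
        rw [norm_q, hρ, Real.exp_le_exp]
        nlinarith
      have := h N
      have h2 : ‖(2 * Real.pi * Complex.I : ℂ)‖ = 2 * Real.pi := by
        simp [abs_of_pos hpi]
      rw [norm_mul (2 * Real.pi * Complex.I : ℂ), h2, norm_mul, norm_mul, norm_pow, Complex.norm_natCast, pow_one]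
      gcongr
    · simp only [Set.mem_setOf_eq]; linarith
    · have hs := (summable_ec k 0 _ (norm_q_lt τ hτ)).of_norm
      simpa only [pow_zero, one_mul] using hs
    · simp only [Set.mem_setOf_eq]; linarith
  have hE : Eis k =ᶠ[nhds τ] (fun z => ∑' N : ℕ, ec k N * Complex.exp (2 * Real.pi * Complex.I * z) ^ N) := by
    filter_upwards [(isOpen_lt continuous_const Complex.continuous_im).mem_nhds hτ] with z hz
    exact Eis_eq k z hz
  rw [Eis', hE.deriv_eq, hD.deriv, tsum_mul_left, ← mul_assoc, inv_mul_cancel₀ Complex.two_pi_I_ne_zero, one_mul]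

theorem hasSum_Eis (k : ℕ) (τ : ℂ) (hτ : 0 < τ.im) :
    HasSum (fun N : ℕ => ec k N * Complex.exp (2 * Real.pi * Complex.I * τ) ^ N) (Eis k τ) := by
  rw [Eis_eq k τ hτ]
  have hs := (summable_ec k 0 _ (norm_q_lt τ hτ)).of_norm
  simp only [pow_zero, one_mul] at hs
  exact hs.hasSum

theorem hasSum_Eis' (k : ℕ) (τ : ℂ) (hτ : 0 < τ.im) :
    HasSum (fun N : ℕ => N * ec k N * Complex.exp (2 * Real.pi * Complex.I * τ) ^ N) (Eis' k τ) := by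
  rw [Eis'_eq k τ hτ]
  have hs := (summable_ec k 1 _ (norm_q_lt τ hτ)).of_norm
  simp only [pow_one] at hs
  exact hs.hasSum

theorem hasSum_Pf (i j : ℕ) (τ : ℂ) (hτ : 0 < τ.im) :
    HasSum (fun N : ℕ => Pc i j N * Complex.exp (2 * Real.pi * Complex.I * τ) ^ N) (Pf i j τ) := by
  set q := Complex.exp (2 * Real.pi * Complex.I * τ) with hq
  have s1 : ∀ k, Summable fun N => ‖ec k N * q ^ N‖ := fun k => by
    have := summable_ec k 0 _ (norm_q_lt τ hτ)
    simpa only [pow_zero, one_mul] using this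
  have h1 : HasSum (fun N : ℕ => (∑ p ∈ antidiagonal N, ec i p.1 * ec j p.2) * q ^ N) (Eis i τ * Eis j τ) := by
    rw [Eis_eq i τ hτ, Eis_eq j τ hτ, tsum_mul_tsum_eq_tsum_sum_antidiagonal_of_summable_norm (s1 i) (s1 j)]
    have := (summable_norm_sum_mul_antidiagonal_of_summable_norm (s1 i) (s1 j)).of_norm.hasSum
    convert! this using 1
    funext N
    rw [Finset.sum_mul]
    refine Finset.sum_congr rfl fun p hp => ?_
    rw [HasAntidiagonal.mem_antidiagonal] at hp
    rw [← hp, pow_add]; ring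
  have h2 : ∀ i j : ℕ, HasSum (fun N : ℕ => (if i = 2 then N * ec j N / j else 0) * q ^ N) 
      (if i = 2 then Eis' j τ / j else 0) := by
    intro i j
    split_ifs
    · convert! (hasSum_Eis' j τ hτ).div_const (j : ℂ) using 1
      funext N
      rw [← hq]; ring
    · simpa using hasSum_zero
  convert! (h1.add (h2 i j)).add (h2 j i) using 1
  funext N
  rw [Pc]; ring

theorem popa_relation (r s : ℕ) (hr : 1 ≤ r) (hs : 1 ≤ s) (h4 : 4 ≤ r + s)
    (he : Even (r + s)) (τ : ℂ) (hτ : 0 < τ.im) :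
    0 = (∑ i ∈ Finset.Icc 1 (r + s - 1),
          (((i - 1).choose (r - 1) + (i - 1).choose (s - 1) : ℕ) : ℂ) *
            (Pf i (r + s - i) τ - Eis (i + (r + s - i)) τ))
      - Pf r s τ + (-1) ^ s * Eis (r + s) τ := by
  obtain ⟨p, rfl⟩ : ∃ p, r = p + 1 := ⟨r - 1, by omega⟩
  obtain ⟨t, rfl⟩ : ∃ t, s = t + 1 := ⟨s - 1, by omega⟩
  obtain ⟨n, hn⟩ : ∃ n, n = p + t := ⟨_, rfl⟩
  have hk : p + 1 + (t + 1) = n + 2 := by omega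
  have hev : Even n := by
    rw [hk] at he
    exact (Nat.even_add.mp he).mpr even_two
  have e : (∑ i ∈ Finset.Icc 1 (p + 1 + (t + 1) - 1),
          (((i - 1).choose (p + 1 - 1) + (i - 1).choose (t + 1 - 1) : ℕ) : ℂ) *
            (Pf i (p + 1 + (t + 1) - i) τ - Eis (i + (p + 1 + (t + 1) - i)) τ))
      = ∑ x ∈ antidiagonal n, ((x.1.choose p : ℂ) + (x.1.choose t : ℂ)) * 
        (Pf (x.1 + 1) (x.2 + 1) τ - Eis (n + 2) τ) := by
    refine Finset.sum_nbij' (fun i => (i - 1, n + 1 - i)) (fun x => x.1 + 1) ?_ ?_ ?_ ?_ ?_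
    · intro i hi
      rw [mem_Icc] at hi
      rw [HasAntidiagonal.mem_antidiagonal]
      simp only
      omega
    · intro x hx
      rw [HasAntidiagonal.mem_antidiagonal] at hx
      rw [mem_Icc]
      omega
    · intro i hi
      rw [mem_Icc] at hi
      simp only
      omega
    · intro x hx
      rw [HasAntidiagonal.mem_antidiagonal] at hx
      refine Prod.ext ?_ ?_ <;> simp only <;> omega
    · intro i hi
      rw [mem_Icc] at hi
      simp only [Nat.add_sub_cancel]
      rw [show i - 1 + 1 = i by omega, show n + 1 - i + 1 = p + 1 + (t + 1) - i by omega,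
        show i + (p + 1 + (t + 1) - i) = n + 2 by omega]
      push_cast
      rfl
  rw [e, hk]
  set q := Complex.exp (2 * Real.pi * Complex.I * τ) with hq
  have hS : HasSum (fun N : ℕ => cc N n (p, t) * q ^ N) (∑ x ∈ antidiagonal n, ((x.1.choose p : ℂ) + (x.1.choose t : ℂ)) * 
        (Pf (x.1 + 1) (x.2 + 1) τ - Eis (n + 2) τ) - Pf (p + 1) (t + 1) τ + (-1) ^ (t + 1) * Eis (n + 2) τ) := by
    have h1 : HasSum (fun N : ℕ => ∑ x ∈ antidiagonal n, ((x.1.choose p : ℂ) + (x.1.choose t : ℂ)) * 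
        (Pc (x.1 + 1) (x.2 + 1) N * q ^ N - ec (n + 2) N * q ^ N)) (∑ x ∈ antidiagonal n, ((x.1.choose p : ℂ) + (x.1.choose t : ℂ)) * 
        (Pf (x.1 + 1) (x.2 + 1) τ - Eis (n + 2) τ)) :=
      hasSum_sum fun x _ => ((hasSum_Pf _ _ τ hτ).sub (hasSum_Eis _ τ hτ)).mul_left _
    convert! (h1.sub (hasSum_Pf (p + 1) (t + 1) τ hτ)).add ((hasSum_Eis (n + 2) τ hτ).mul_left ((-1) ^ (t + 1))) using 1
    funext N
    rw [cc, add_mul, sub_mul, Finset.sum_mul]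
    rw [mul_assoc ((-1 : ℂ) ^ _)]
    congr 2
    exact Finset.sum_congr rfl fun x _ => by ring
  have hz : ∀ N, cc N n (p, t) = 0 := fun N => 
    cc_zero N n (by omega) hev (p, t) (by rw [HasAntidiagonal.mem_antidiagonal]; exact hn.symm)
  simp only [hz, zero_mul] at hS
  exact hasSum_zero.unique hS
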